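/- arXiv:1607.04128 — 3 statements merged into one kernel-verified Lean document; each statement's English description precedes it below -/
import Mathlib

section
/- There exist directed-complete partial orders (dcpos) X₁ and X₂ such that the Scott topology on the product X₁ × X₂ (equipped with the componentwise partial order) is strictly finer than the product topology of the Scott topology on X₁ and the Scott topology on X₂. -/
/-!
Give a dcpo `α` its Scott topology and order the open sets by inclusion. Then the membership
relation `{(x, U) | x ∈ U}` is Scott open in `α × Opens α`, because it is Scott continuous in each
variable separately. If it were open in the product of the two Scott topologies, a box around
`(x, U)` inside it would have a first side way below `U`, so `α` would be core-compact.

A dcpo that is not core-compact is obtained by adding a common top to infinitely many copies of `ℕ`.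
An open neighbourhood `V` of `⊤` contains a point `g i` of every copy. The complements of the sets
`⋃ i ∉ F, Iic (g i)`, for `F` finite, form a directed open cover none of whose members contains `V`.
-/

/-- A dcpo: a partially ordered set in which every (nonempty) directed subset has a least
upper bound. -/
def IsDcpo (X : Type) [PartialOrder X] : Prop :=
  ∀ d : Set X, d.Nonempty → DirectedOn (· ≤ ·) d → ∃ a, IsLUB d a

/-- The Scott topology on `X₁ × X₂` (with the componentwise order) is strictly finer than the
product topology of the Scott topologies on the factors. -/
def ScottStrictlyFinerThanProd (X₁ X₂ : Type) [Preorder X₁] [Preorder X₂] : Prop :=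
  (∀ U : Set (X₁ × X₂),
      (@instTopologicalSpaceProd X₁ X₂ (Topology.scott X₁ Set.univ)
        (Topology.scott X₂ Set.univ)).IsOpen U →
      (Topology.scott (X₁ × X₂) Set.univ).IsOpen U) ∧
  ∃ U : Set (X₁ × X₂), (Topology.scott (X₁ × X₂) Set.univ).IsOpen U ∧
    ¬ (@instTopologicalSpaceProd X₁ X₂ (Topology.scott X₁ Set.univ)
        (Topology.scott X₂ Set.univ)).IsOpen U

open Set TopologicalSpace Topology

section Order

theorem exists_isGreatest_of_finite_of_directedOn {α : Type*} [Preorder α] {s : Set α}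
    (hfin : s.Finite) (hne : s.Nonempty) (hdir : DirectedOn (· ≤ ·) s) : ∃ a, IsGreatest s a := by
  have := hfin.to_subtype
  have := hne.to_subtype
  obtain ⟨⟨a, ha⟩, hle⟩ := hdir.directed_val.finite_le id
  exact ⟨a, ha, fun b hb ↦ hle ⟨b, hb⟩⟩

theorem isLUB_image_coe_top_of_not_bddAbove {α : Type*} [Preorder α] {s : Set α}
    (hs : ¬BddAbove s) : IsLUB ((↑) '' s : Set (WithTop α)) ⊤ := by
  refine ⟨fun _ _ ↦ le_top, fun b hb ↦ ?_⟩
  induction b with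
  | top => exact le_rfl
  | coe b => exact absurd ⟨b, fun a ha ↦ WithTop.coe_le_coe.1 (hb ⟨a, ha, rfl⟩)⟩ hs

theorem dirSupClosed_biUnion_Iic {ι : Type*} {α : Type*} [Preorder α] {s : Set ι} {g : ι → α}
    (hg : s.PairwiseDisjoint fun i ↦ Iic (g i)) : DirSupClosed (⋃ i ∈ s, Iic (g i)) := by
  intro d hd ⟨x, hx⟩ hdir a ha
  simp only [subset_def, mem_iUnion, mem_Iic, exists_prop] at hd ⊢
  obtain ⟨i, hi, hxi⟩ := hd x hx
  refine ⟨i, hi, ha.2 fun y hy ↦ ?_⟩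
  obtain ⟨z, hz, hxz, hyz⟩ := hdir x hx y hy
  obtain ⟨j, hj, hzj⟩ := hd z hz
  obtain rfl : i = j := hg.elim_set hi hj x hxi (hxz.trans hzj)
  exact hyz.trans hzj

theorem isDcpo_of_completeLattice (X : Type) [CompleteLattice X] : IsDcpo X :=
  fun d _ _ ↦ ⟨sSup d, isLUB_sSup d⟩

theorem isDcpo_withTop (X : Type) [PartialOrder X] [LocallyFiniteOrderBot X] :
    IsDcpo (WithTop X) := by
  intro d hne hdir
  by_cases htop : ⊤ ∈ d
  · exact ⟨⊤, fun _ _ ↦ le_top, fun _ hb ↦ hb htop⟩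
  obtain ⟨s, rfl⟩ : ∃ s : Set X, (↑) '' s = d :=
    subset_range_iff_exists_image_eq.1 fun x hx ↦
      ⟨x.untop (ne_of_mem_of_not_mem hx htop), WithTop.coe_untop ..⟩
  by_cases hbdd : BddAbove s
  · have hdir' : DirectedOn (· ≤ ·) s :=
      (directedOn_image.1 hdir).mono fun _ _ h ↦ WithTop.coe_le_coe.1 h
    obtain ⟨a, ha⟩ := exists_isGreatest_of_finite_of_directedOn hbdd.finite hne.of_image hdir'
    exact ⟨a, (WithTop.coe_mono.map_isGreatest ha).isLUB⟩
  · exact ⟨⊤, isLUB_image_coe_top_of_not_bddAbove hbdd⟩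

end Order

/-- The way-below relation of domain theory: `x` is way below `y` if every nonempty directed set
whose supremum is above `y` has a member above `x`. It is used to express core-compactness. -/
def WayBelow {α : Type*} [Preorder α] (x y : α) : Prop :=
  ∀ ⦃d : Set α⦄, d.Nonempty → DirectedOn (· ≤ ·) d → ∀ ⦃a⦄, IsLUB d a → y ≤ a → ∃ b ∈ d, x ≤ b

/-- Core-compactness of a topological space: every open neighbourhood of a point contains one
that is way below it in the lattice of open sets. -/
def IsCoreCompact (α : Type*) [TopologicalSpace α] : Prop :=
  ∀ U : Opens α, ∀ x ∈ U, ∃ V : Opens α, x ∈ V ∧ WayBelow V U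

section Scott

variable {α β : Type*} [TopologicalSpace α] [TopologicalSpace β]

theorem scott_prod_le [Preorder α] [Preorder β] [IsScott α univ] [IsScott β univ] :
    scott (α × β) univ ≤ instTopologicalSpaceProd := by
  let _ : TopologicalSpace (α × β) := scott (α × β) univ
  have : IsScott (α × β) univ := ⟨rfl⟩
  have continuous_fst : Continuous (Prod.fst : α × β → α) :=
    (IsScott.scottContinuousOn_iff_continuous fun _ _ _ ↦ mem_univ _).1 ScottContinuousOn.fst
  have continuous_snd : Continuous (Prod.snd : α × β → β) :=
    (IsScott.scottContinuousOn_iff_continuous fun _ _ _ ↦ mem_univ _).1 ScottContinuousOn.snd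
  exact le_inf continuous_fst.le_induced continuous_snd.le_induced

theorem scottContinuous_mem_opens (x : α) : ScottContinuous fun U : Opens α ↦ x ∈ U := by
  intro d _ _ U hU
  obtain rfl := hU.sSup_eq
  refine ⟨?_, fun p hp hx ↦ ?_⟩
  · rintro _ ⟨V, hV, rfl⟩ hx
    exact Opens.mem_sSup.2 ⟨V, hV, hx⟩
  · obtain ⟨V, hV, hxV⟩ := Opens.mem_sSup.1 hx
    exact hp ⟨V, hV, rfl⟩ hxV

theorem scottContinuous_fst_mem_snd [Preorder α] [IsScott α univ] :
    ScottContinuous fun p : α × Opens α ↦ p.1 ∈ p.2 :=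
  .fromProd scottContinuous_mem_opens fun U ↦ IsScott.isOpen_iff_scottContinuous_mem.1 U.isOpen

theorem isCoreCompact_of_isOpen_setOf_mem [TopologicalSpace (Opens α)] [IsScott (Opens α) univ]
    (h : IsOpen {p : α × Opens α | p.1 ∈ p.2}) : IsCoreCompact α := by
  intro U x hx
  obtain ⟨V, 𝒱, hV, h𝒱, hxV, hU𝒱, hsub⟩ := isOpen_prod_iff.1 h x U hx
  refine ⟨⟨V, hV⟩, hxV, fun d hne hdir W hW hUW ↦ ?_⟩
  obtain ⟨hupper, hinacc⟩ := (IsScott.isOpen_iff_isUpperSet_and_dirSupInaccOn (D := univ)).1 h𝒱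
  obtain ⟨B, hBd, hB𝒱⟩ := hinacc trivial hne hdir hW (hupper hUW hU𝒱)
  exact ⟨B, hBd, fun y hy ↦ hsub (mk_mem_prod hy hB𝒱)⟩

theorem not_wayBelow_top_of_pairwise_disjoint_Iic [Preorder α] [IsScott α univ] {ι : Type*}
    [Infinite ι] {V : Opens α} {g : ι → α} (hgV : ∀ i, g i ∈ V)
    (hg : Pairwise (Function.onFun Disjoint fun i ↦ Iic (g i))) : ¬WayBelow V ⊤ := by
  classical
  have isClosed_biUnion (F : Finset ι) : IsClosed (⋃ i ∈ (F : Set ι)ᶜ, Iic (g i)) :=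
    IsScott.isClosed_iff_isLowerSet_and_dirSupClosed.2
      ⟨isLowerSet_iUnion₂ fun i _ ↦ isLowerSet_Iic (g i),
        dirSupClosed_biUnion_Iic (hg.set_pairwise _)⟩
  let W (F : Finset ι) : Opens α := ⟨_, (isClosed_biUnion F).isOpen_compl⟩
  have mem_W {F : Finset ι} {x : α} : x ∈ W F ↔ ∀ i, x ≤ g i → i ∈ F := by
    simp [W, ← SetLike.mem_coe, not_imp_not]
  have W_mono : Monotone W := fun F G hFG x hx ↦ mem_W.2 fun i hi ↦ hFG (mem_W.1 hx i hi)
  have iSup_W : ⨆ F, W F = ⊤ := by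
    refine top_unique fun x _ ↦ Opens.mem_iSup.2 ?_
    by_cases hx : ∃ i, x ≤ g i
    · obtain ⟨i, hi⟩ := hx
      exact ⟨{i}, mem_W.2 fun j hj ↦ Finset.mem_singleton.2 <|
        hg.eq (not_disjoint_iff.2 ⟨x, hj, hi⟩)⟩
    · exact ⟨∅, mem_W.2 fun i hi ↦ absurd ⟨i, hi⟩ hx⟩
  intro hV
  obtain ⟨_, ⟨F, rfl⟩, hVF⟩ :=
    hV (range_nonempty W) (directedOn_range.2 W_mono.directed_le) isLUB_iSup iSup_W.ge
  obtain ⟨i, hi⟩ := Infinite.exists_notMem_finset F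
  exact hi (mem_W.1 (hVF (hgV i)) i le_rfl)

theorem scottStrictlyFinerThanProd_opens {X : Type} [Preorder X] [TopologicalSpace X]
    [IsScott X univ] (hX : ¬IsCoreCompact X) : ScottStrictlyFinerThanProd X (Opens X) := by
  obtain rfl := IsScott.topology_eq X univ
  let _ : TopologicalSpace X := scott X univ
  let _ : TopologicalSpace (Opens X) := scott (Opens X) univ
  have : IsScott (Opens X) univ := ⟨rfl⟩
  let _ : TopologicalSpace (X × Opens X) := scott (X × Opens X) univ
  have : IsScott (X × Opens X) univ := ⟨rfl⟩
  exact ⟨scott_prod_le, {p | p.1 ∈ p.2},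
    IsScott.isOpen_iff_scottContinuous_mem.2 scottContinuous_fst_mem_snd,
    fun h ↦ hX (isCoreCompact_of_isOpen_setOf_mem h)⟩

end Scott

section WithTopSigma

variable {ι : Type*} {κ : ι → Type*} [∀ i, Preorder (κ i)]

theorem disjoint_Iic_coe_sigma_mk {i j : ι} (hij : i ≠ j) (a : κ i) (b : κ j) :
    Disjoint (Iic ((⟨i, a⟩ : Σ i, κ i) : WithTop (Σ i, κ i))) (Iic ↑(⟨j, b⟩ : Σ i, κ i)) := by
  rw [disjoint_left]
  intro x hxa hxb
  induction x with
  | top => exact WithTop.not_top_le_coe _ hxa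
  | coe x =>
    obtain ⟨hxi, -⟩ := Sigma.le_def.1 (WithTop.coe_le_coe.1 hxa)
    obtain ⟨hxj, -⟩ := Sigma.le_def.1 (WithTop.coe_le_coe.1 hxb)
    exact hij (hxi.symm.trans hxj)

theorem not_bddAbove_range_sigma_mk (i : ι) [Nonempty (κ i)] [NoMaxOrder (κ i)] :
    ¬BddAbove (range (Sigma.mk i : κ i → Σ i, κ i)) := by
  rintro ⟨x, hx⟩
  obtain ⟨_, _, b, -⟩ := hx ⟨Classical.arbitrary (κ i), rfl⟩
  obtain ⟨c, hc⟩ := exists_gt b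
  exact hc.not_ge (Sigma.mk_le_mk_iff.1 (hx ⟨c, rfl⟩))

theorem exists_coe_sigma_mk_mem (i : ι) [Nonempty (κ i)] [NoMaxOrder (κ i)]
    [IsDirectedOrder (κ i)] [TopologicalSpace (WithTop (Σ i, κ i))]
    [IsScott (WithTop (Σ i, κ i)) univ] {V : Opens (WithTop (Σ i, κ i))} (hV : ⊤ ∈ V) :
    ∃ a : κ i, ↑(⟨i, a⟩ : Σ i, κ i) ∈ V := by
  have mono : Monotone fun a : κ i ↦ ((⟨i, a⟩ : Σ i, κ i) : WithTop (Σ i, κ i)) :=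
    fun a b hab ↦ WithTop.coe_le_coe.2 (Sigma.mk_le_mk_iff.2 hab)
  have isLUB_top := isLUB_image_coe_top_of_not_bddAbove (not_bddAbove_range_sigma_mk (κ := κ) i)
  rw [← range_comp] at isLUB_top
  obtain ⟨_, ⟨a, rfl⟩, ha⟩ :=
    (IsScott.isOpen_iff_isUpperSet_and_dirSupInaccOn (D := univ)).1 V.isOpen |>.2 trivial
      (range_nonempty _) (directedOn_range.2 mono.directed_le) isLUB_top hV
  exact ⟨a, ha⟩

theorem not_isCoreCompact_withTop_sigma [Infinite ι] [∀ i, Nonempty (κ i)] [∀ i, NoMaxOrder (κ i)]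
    [∀ i, IsDirectedOrder (κ i)] [TopologicalSpace (WithTop (Σ i, κ i))]
    [IsScott (WithTop (Σ i, κ i)) univ] : ¬IsCoreCompact (WithTop (Σ i, κ i)) := by
  intro h
  obtain ⟨V, htop, hV⟩ := h ⊤ ⊤ trivial
  choose g hg using fun i ↦ exists_coe_sigma_mk_mem i htop
  exact not_wayBelow_top_of_pairwise_disjoint_Iic hg
    (fun i j hij ↦ disjoint_Iic_coe_sigma_mk hij (g i) (g j)) hV

end WithTopSigma

/-- There exist dcpos `X₁` and `X₂` such that the Scott topology on the product `X₁ × X₂`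
(with the componentwise partial order) is strictly finer than the product topology of the
Scott topology on `X₁` and the Scott topology on `X₂`. -/
theorem stmt_4 : ∃ (X₁ X₂ : Type) (p₁ : PartialOrder X₁) (p₂ : PartialOrder X₂),
    @IsDcpo X₁ p₁ ∧ @IsDcpo X₂ p₂ ∧
    @ScottStrictlyFinerThanProd X₁ X₂ p₁.toPreorder p₂.toPreorder := by
  let X := WithTop (Σ _ : ℕ, ℕ)
  let _ : TopologicalSpace X := scott X univ
  have : IsScott X univ := ⟨rfl⟩
  exact ⟨X, Opens X, inferInstance, inferInstance, isDcpo_withTop _, isDcpo_of_completeLattice _,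
    scottStrictlyFinerThanProd_opens not_isCoreCompact_withTop_sigma⟩
end

section
/- Let X₁ and X₂ be complete lattices and let Z = X₁ × X₂ with the componentwise order (which is again a complete lattice). Let E ⊆ X₁ × X₂ be any subset. If the preimage D = { (z, z') ∈ Z × Z : z ⊔ z' ∈ E } of E under the binary supremum function on Z is open in the product topology on Z × Z of the Scott topology on each copy of Z, then E is open in the product topology on X₁ × X₂ of the Scott topology on X₁ and the Scott topology on X₂. -/
/-!
In a join-semilattice with bottom, `(x, y) = (x, ⊥) ⊔ (⊥, y)`. Hence `E` is the preimage of
`{(z, z') | z ⊔ z' ∈ E}` under the product of the coordinate embeddings `x ↦ (x, ⊥)` and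
`y ↦ (⊥, y)`, which are Scott continuous and therefore continuous for the Scott topologies.
-/

open Set Topology

section Preorder

/-- The product of the Scott topologies on `α` and `β`, as opposed to the Scott topology of the
product order on `α × β`, which is finer in general. -/
abbrev scottProd (α β : Type*) [Preorder α] [Preorder β] : TopologicalSpace (α × β) :=
  @instTopologicalSpaceProd α β (scott α univ) (scott β univ)

variable {α β γ δ : Type*} [Preorder α] [Preorder β] [Preorder γ] [Preorder δ]

theorem continuous_scott_of_scottContinuous {f : α → β} (hf : ScottContinuous f) :
    Continuous[scott α univ, scott β univ] f := by
  let := scott α univ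
  let := scott β univ
  have : IsScott α univ := ⟨rfl⟩
  have : IsScott β univ := ⟨rfl⟩
  exact (IsScott.scottContinuousOn_iff_continuous fun _ _ _ ↦ mem_univ _).1
    (scottContinuousOn_univ.2 hf)

theorem continuous_scottProd_prodMap {f : α → γ} {g : β → δ}
    (hf : ScottContinuous f) (hg : ScottContinuous g) :
    Continuous[scottProd α β, scottProd γ δ] (Prod.map f g) := by
  let := scott α univ
  let := scott β univ
  let := scott γ univ
  let := scott δ univ
  exact (continuous_scott_of_scottContinuous hf).prodMap (continuous_scott_of_scottContinuous hg)

theorem scottContinuous_prodMk_left (b : β) : ScottContinuous fun a : α ↦ (a, b) :=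
  .prodMk .id (.const b)

theorem scottContinuous_prodMk_right (a : α) : ScottContinuous fun b : β ↦ (a, b) :=
  .prodMk (.const a) .id

end Preorder

section SemilatticeSup

variable {X₁ X₂ : Type*} [SemilatticeSup X₁] [OrderBot X₁] [SemilatticeSup X₂] [OrderBot X₂]

theorem preimage_prodMap_prodMk_bot_setOf_sup_mem (E : Set (X₁ × X₂)) :
    Prod.map (fun x ↦ (x, ⊥)) (fun y ↦ (⊥, y)) ⁻¹'
      {p : (X₁ × X₂) × (X₁ × X₂) | p.1 ⊔ p.2 ∈ E} = E := by
  ext ⟨x, y⟩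
  simp

theorem stmt_12_general {E : Set (X₁ × X₂)}
    (hD : IsOpen[scottProd (X₁ × X₂) (X₁ × X₂)] {p | p.1 ⊔ p.2 ∈ E}) :
    IsOpen[scottProd X₁ X₂] E := by
  rw [← preimage_prodMap_prodMk_bot_setOf_sup_mem E]
  exact continuous_def.1 (continuous_scottProd_prodMap (scottContinuous_prodMk_left ⊥)
    (scottContinuous_prodMk_right ⊥)) _ hD

end SemilatticeSup

/-- Let `X₁` and `X₂` be complete lattices and let `Z = X₁ × X₂` with the componentwise order.
Let `E ⊆ X₁ × X₂`. If the preimage `D = {(z, z') : z ⊔ z' ∈ E}` of `E` under the binary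
supremum function on `Z` is open in the product topology on `Z × Z` of the Scott topology on
each copy of `Z`, then `E` is open in the product topology on `X₁ × X₂` of the Scott topology
on `X₁` and the Scott topology on `X₂`. -/
theorem stmt_12 (X₁ X₂ : Type) [CompleteLattice X₁] [CompleteLattice X₂] (E : Set (X₁ × X₂))
    (hD : (@instTopologicalSpaceProd (X₁ × X₂) (X₁ × X₂)
        (Topology.scott (X₁ × X₂) Set.univ) (Topology.scott (X₁ × X₂) Set.univ)).IsOpen
      {p : (X₁ × X₂) × (X₁ × X₂) | p.1 ⊔ p.2 ∈ E}) :
    (@instTopologicalSpaceProd X₁ X₂ (Topology.scott X₁ Set.univ)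
      (Topology.scott X₂ Set.univ)).IsOpen E :=
  stmt_12_general hD
end

section
/- Let X₁ be the set {⊥} ∪ (ℕ × (ℕ ∪ {ω})) ∪ {⊤} with the partial order ≤ characterized by: ⊥ ≤ x and x ≤ ⊤ for all x, and (i, p) ≤ (j, q) iff (i = j and p ≤ q) or (i ≤ j and q = ω). Then every subset U ⊆ X₁ that is open in the Scott topology on X₁ and satisfies U ≠ ∅ and U ≠ X₁ is of the form V_f = { (i, j) ∈ ℕ × (ℕ ∪ {ω}) : i ≥ n and f(i) ≤ j } ∪ {⊤} for some n ∈ ℕ and some function f : ℕ → ℕ. -/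
/-- The carrier `{⊥} ∪ (ℕ × (ℕ ∪ {ω})) ∪ {⊤}`, realized as `WithBot (WithTop (ℕ × ℕ∞))`. -/
abbrev ModJohnstone : Type := WithBot (WithTop (ℕ × ℕ∞))

/-- The element `(i, q) ∈ ℕ × (ℕ ∪ {ω})` of the carrier. -/
def ModJohnstone.pair (i : ℕ) (q : ℕ∞) : ModJohnstone :=
  ((((i, q) : ℕ × ℕ∞) : WithTop (ℕ × ℕ∞)) : WithBot (WithTop (ℕ × ℕ∞)))

/-- The element `⊤` of the carrier. -/
def ModJohnstone.top : ModJohnstone := ((⊤ : WithTop (ℕ × ℕ∞)) : WithBot (WithTop (ℕ × ℕ∞)))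

/-- The element `⊥` of the carrier. -/
def ModJohnstone.bot : ModJohnstone := (⊥ : WithBot (WithTop (ℕ × ℕ∞)))

/-!
In `X₁` the chain `(0, ω) ≤ (1, ω) ≤ ⋯` has supremum `⊤`, and each chain `(i, 0) ≤ (i, 1) ≤ ⋯` has
supremum `(i, ω)`. If a Scott open `U` contains `⊤`, it meets the first chain, so `{i | (i, ω) ∈ U}`
is a ray `{i | n ≤ i}`. For such an `i`, `U` also meets the chain below `(i, ω)`, so the column
`{q | (i, q) ∈ U}` is a ray with a finite least element `f i`.
-/

open Set

section ScottOpen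

variable {α : Type*} [Preorder α] {U : Set α}

theorem isOpen_scott_univ_iff :
    (Topology.scott α univ).IsOpen U ↔ IsUpperSet U ∧ DirSupInacc U := by
  let _ : TopologicalSpace α := Topology.scott α univ
  have : Topology.IsScott α univ := ⟨rfl⟩
  rw [← dirSupInaccOn_univ]
  exact Topology.IsScott.isOpen_iff_isUpperSet_and_dirSupInaccOn

theorem exists_mem_of_directed_of_isLUB_range {ι : Sort*} [Nonempty ι] {s : ι → α} {a : α}
    (hU : DirSupInacc U) (hs : Directed (· ≤ ·) s) (hlub : IsLUB (range s) a) (ha : a ∈ U) :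
    ∃ i, s i ∈ U := by
  obtain ⟨_, ⟨i, rfl⟩, hi⟩ := hU (range_nonempty s) (directedOn_range.2 hs) hlub ha
  exact ⟨i, hi⟩

end ScottOpen

theorem exists_eq_Ici_natCast_of_isUpperSet {s : Set ℕ∞} (hs : IsUpperSet s) {m : ℕ}
    (hm : (m : ℕ∞) ∈ s) : ∃ k : ℕ, s = Ici (k : ℕ∞) := by
  obtain rfl | ⟨q, rfl⟩ := hs.eq_empty_or_Ici
  · exact hm.elim
  · lift q to ℕ using ne_top_of_le_ne_top (ENat.natCast_ne_top m) hm
    exact ⟨q, rfl⟩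

/-- The preorder on `α` is that of the space `X₁`: `α` consists of a least element `bot`, a
greatest element `top`, and the elements `pair i q`, which are ordered as in `X₁`. Abstracting from
the carrier keeps the order of `X₁` apart from the one that instance resolution finds on
`WithBot (WithTop (ℕ × ℕ∞))`. -/
structure IsModJohnstone {α : Type*} [Preorder α] (bot top : α) (pair : ℕ → ℕ∞ → α) : Prop where
  isBot : IsBot bot
  isTop : IsTop top
  pair_le_pair_iff {i j : ℕ} {q r : ℕ∞} : pair i q ≤ pair j r ↔ i = j ∧ q ≤ r ∨ i ≤ j ∧ r = ⊤
  eq_bot_or_eq_top_or_eq_pair (x : α) : x = bot ∨ x = top ∨ ∃ i q, x = pair i q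

namespace IsModJohnstone

variable {α : Type*} [Preorder α] {bot top : α} {pair : ℕ → ℕ∞ → α} {U : Set α}

theorem pair_le_pair_top_iff (h : IsModJohnstone bot top pair) {i j : ℕ} {q : ℕ∞} :
    pair i q ≤ pair j ⊤ ↔ i ≤ j := by
  simpa [h.pair_le_pair_iff] using le_of_eq

theorem le_of_pair_le_pair (h : IsModJohnstone bot top pair) {i j : ℕ} {q r : ℕ∞}
    (hle : pair i q ≤ pair j r) : i ≤ j :=
  (h.pair_le_pair_iff.1 hle).elim (·.1.le) (·.1)

theorem monotone_pair (h : IsModJohnstone bot top pair) (i : ℕ) : Monotone (pair i) :=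
  fun _ _ hle ↦ h.pair_le_pair_iff.2 (.inl ⟨rfl, hle⟩)

theorem monotone_pair_top (h : IsModJohnstone bot top pair) : Monotone (pair · ⊤) :=
  fun _ _ hle ↦ h.pair_le_pair_top_iff.2 hle

theorem not_pair_le_bot (h : IsModJohnstone bot top pair) (i : ℕ) (q : ℕ∞) : ¬pair i q ≤ bot :=
  fun hle ↦ by simpa [h.pair_le_pair_iff] using hle.trans (h.isBot (pair (i + 1) 0))

theorem eq_top_or_eq_pair_of_pair_le (h : IsModJohnstone bot top pair) {i : ℕ} {q : ℕ∞} {x : α}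
    (hle : pair i q ≤ x) : x = top ∨ ∃ j r, x = pair j r := by
  obtain rfl | hx := h.eq_bot_or_eq_top_or_eq_pair x
  · exact (h.not_pair_le_bot i q hle).elim
  · exact hx

theorem isLUB_range_pair_top (h : IsModJohnstone bot top pair) : IsLUB (range (pair · ⊤)) top := by
  refine ⟨fun x _ ↦ h.isTop x, fun b hb ↦ ?_⟩
  have le_b (i : ℕ) : pair i ⊤ ≤ b := hb (mem_range_self i)
  obtain rfl | ⟨j, r, rfl⟩ := h.eq_top_or_eq_pair_of_pair_le (le_b 0)
  · exact le_rfl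
  · exact absurd (h.le_of_pair_le_pair (le_b (j + 1))) j.not_succ_le_self

theorem isLUB_range_pair_natCast (h : IsModJohnstone bot top pair) (i : ℕ) :
    IsLUB (range fun m : ℕ ↦ pair i m) (pair i ⊤) := by
  refine ⟨forall_mem_range.2 fun m ↦ h.monotone_pair i le_top, fun b hb ↦ ?_⟩
  have le_b (m : ℕ) : pair i m ≤ b := hb (mem_range_self m)
  obtain rfl | ⟨j, r, rfl⟩ := h.eq_top_or_eq_pair_of_pair_le (le_b 0)
  · exact h.isTop _
  · obtain rfl : r = ⊤ := ENat.eq_top_iff_forall_ge.2 fun m ↦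
      (h.pair_le_pair_iff.1 (le_b m)).elim (·.2) fun hr ↦ hr.2 ▸ le_top
    exact h.pair_le_pair_top_iff.2 (h.le_of_pair_le_pair (le_b 0))

theorem exists_pair_top_mem_iff (h : IsModJohnstone bot top pair) (hup : IsUpperSet U)
    (hinacc : DirSupInacc U) (htop : top ∈ U) : ∃ n, ∀ i, pair i ⊤ ∈ U ↔ n ≤ i := by
  obtain ⟨m, hm⟩ := exists_mem_of_directed_of_isLUB_range hinacc h.monotone_pair_top.directed_le
    h.isLUB_range_pair_top htop
  obtain hempty | ⟨n, hn⟩ := (hup.preimage h.monotone_pair_top).eq_empty_or_Ici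
  · exact (hempty.subset hm).elim
  · exact ⟨n, fun i ↦ Set.ext_iff.1 hn i⟩

theorem exists_pair_mem_iff_natCast_le (h : IsModJohnstone bot top pair) (hup : IsUpperSet U)
    (hinacc : DirSupInacc U) {i : ℕ} (hi : pair i ⊤ ∈ U) :
    ∃ k : ℕ, ∀ q, pair i q ∈ U ↔ (k : ℕ∞) ≤ q := by
  obtain ⟨m, hm⟩ := exists_mem_of_directed_of_isLUB_range hinacc
    ((h.monotone_pair i).comp Nat.mono_cast).directed_le (h.isLUB_range_pair_natCast i) hi
  obtain ⟨k, hk⟩ := exists_eq_Ici_natCast_of_isUpperSet (hup.preimage (h.monotone_pair i)) hm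
  exact ⟨k, fun q ↦ Set.ext_iff.1 hk q⟩

theorem exists_pair_mem_iff (h : IsModJohnstone bot top pair) (hup : IsUpperSet U)
    (hinacc : DirSupInacc U) (htop : top ∈ U) :
    ∃ (n : ℕ) (f : ℕ → ℕ), ∀ i q, pair i q ∈ U ↔ n ≤ i ∧ (f i : ℕ∞) ≤ q := by
  obtain ⟨n, hn⟩ := h.exists_pair_top_mem_iff hup hinacc htop
  have column (i : ℕ) : ∃ k : ℕ, n ≤ i → ∀ q, pair i q ∈ U ↔ (k : ℕ∞) ≤ q := by
    by_cases hi : n ≤ i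
    · exact (h.exists_pair_mem_iff_natCast_le hup hinacc ((hn i).2 hi)).imp fun _ hk _ ↦ hk
    · exact ⟨0, (absurd · hi)⟩
  choose f hf using column
  refine ⟨n, f, fun i q ↦ ⟨fun hq ↦ ?_, fun ⟨hi, hq⟩ ↦ (hf i hi q).2 hq⟩⟩
  have hi : n ≤ i := (hn i).1 (hup (h.monotone_pair i le_top) hq)
  exact ⟨hi, (hf i hi q).1 hq⟩

end IsModJohnstone

theorem ModJohnstone.eq_bot_or_eq_top_or_eq_pair (x : ModJohnstone) :
    x = bot ∨ x = top ∨ ∃ i q, x = pair i q := by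
  rcases x with _ | _ | ⟨i, q⟩
  exacts [.inl rfl, .inr (.inl rfl), .inr (.inr ⟨i, q, rfl⟩)]

/-- Let `X₁ = {⊥} ∪ (ℕ × (ℕ ∪ {ω})) ∪ {⊤}` with the partial order characterized by: `⊥ ≤ x`
and `x ≤ ⊤` for all `x`, and `(i, p) ≤ (j, q)` iff (`i = j` and `p ≤ q`) or (`i ≤ j` and
`q = ω`). Then every subset `U` of `X₁` that is Scott open, nonempty, and not all of `X₁` is
of the form `V_f = {(i, j) : i ≥ n and f i ≤ j} ∪ {⊤}` for some `n : ℕ` and `f : ℕ → ℕ`. -/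
theorem stmt_15 (p : PartialOrder ModJohnstone)
    (hbot : ∀ x : ModJohnstone, p.le ModJohnstone.bot x)
    (htop : ∀ x : ModJohnstone, p.le x ModJohnstone.top)
    (hpair : ∀ (i j : ℕ) (q r : ℕ∞),
      p.le (ModJohnstone.pair i q) (ModJohnstone.pair j r) ↔
        ((i = j ∧ q ≤ r) ∨ (i ≤ j ∧ r = ⊤)))
    (U : Set ModJohnstone)
    (hU : (@Topology.scott ModJohnstone Set.univ p.toPreorder).IsOpen U)
    (hne : U ≠ ∅) (hnuniv : U ≠ Set.univ) :
    ∃ (n : ℕ) (f : ℕ → ℕ),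
      U = {x : ModJohnstone | ∃ (i : ℕ) (j : ℕ∞), n ≤ i ∧ (f i : ℕ∞) ≤ j ∧
          x = ModJohnstone.pair i j} ∪ {ModJohnstone.top} := by
  have hX : @IsModJohnstone _ p.toPreorder ModJohnstone.bot ModJohnstone.top ModJohnstone.pair :=
    @IsModJohnstone.mk _ p.toPreorder _ _ _ hbot htop (hpair _ _ _ _)
      ModJohnstone.eq_bot_or_eq_top_or_eq_pair
  obtain ⟨hup, hinacc⟩ := (@isOpen_scott_univ_iff _ p.toPreorder U).1 hU
  have bot_notMem : ModJohnstone.bot ∉ U := fun hb ↦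
    hnuniv (eq_univ_of_forall fun x ↦ hup (hbot x) hb)
  have top_mem : ModJohnstone.top ∈ U :=
    (nonempty_iff_ne_empty.2 hne).elim fun x hx ↦ hup (htop x) hx
  obtain ⟨n, f, hnf⟩ :=
    @IsModJohnstone.exists_pair_mem_iff _ p.toPreorder _ _ _ U hX hup hinacc top_mem
  refine ⟨n, f, Subset.antisymm (fun x hx ↦ ?_) ?_⟩
  · obtain rfl | rfl | ⟨i, j, rfl⟩ := ModJohnstone.eq_bot_or_eq_top_or_eq_pair x
    · exact absurd hx bot_notMem
    · exact .inr rfl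
    · obtain ⟨hi, hj⟩ := (hnf i j).1 hx
      exact .inl ⟨i, j, hi, hj, rfl⟩
  · rintro _ (⟨i, j, hi, hj, rfl⟩ | rfl)
    · exact (hnf i j).2 ⟨hi, hj⟩
    · exact top_mem
end
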